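/- Let U be a unitary matrix on ℂ^A ⊗ ℂ^B (A, B finite nonempty types). The unitary channel X ↦ U X U† is causal if and only if U is a product unitary, i.e., there exist a unitary U_A on ℂ^A and a unitary U_B on ℂ^B with U = U_A ⊗ U_B. In particular every non-product unitary transformation is signalling. -/

import Mathlib

open Matrix BigOperators
open scoped Kronecker ComplexOrder

noncomputable section

/-- Partial trace over the `A` factor. -/
def trA {A B : Type*} [Fintype A] (ρ : Matrix (A × B) (A × B) ℂ) : Matrix B B ℂ :=
  Matrix.of fun b b' => ∑ a, ρ (a, b) (a, b')

/-- Partial trace over the `B` factor. -/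
def trB {A B : Type*} [Fintype B] (ρ : Matrix (A × B) (A × B) ℂ) : Matrix A A ℂ :=
  Matrix.of fun a a' => ∑ b, ρ (a, b) (a', b)

/-- A state: positive semidefinite matrix of trace 1. -/
def IsState {n : Type*} [Fintype n] (ρ : Matrix n n ℂ) : Prop :=
  ρ.PosSemidef ∧ ρ.trace = 1

/-- A channel: a map admitting a Kraus representation `Λ[X] = ∑ i, K i * X * (K i)ᴴ`
with `∑ i, (K i)ᴴ * K i = 1` (completely positive and trace-preserving). -/
def IsChannel {n : Type*} [Fintype n] [DecidableEq n]
    (Λ : Matrix n n ℂ → Matrix n n ℂ) : Prop :=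
  ∃ (m : ℕ) (K : Fin m → Matrix n n ℂ),
    (∀ X, Λ X = ∑ i, K i * X * (K i)ᴴ) ∧ (∑ i, (K i)ᴴ * K i = 1)

/-- The induced map `Γ ⊗ id` on the bipartite system, acting blockwise. -/
def tensIdA {A B : Type*} (Γ : Matrix A A ℂ → Matrix A A ℂ)
    (ρ : Matrix (A × B) (A × B) ℂ) : Matrix (A × B) (A × B) ℂ :=
  Matrix.of fun p q => Γ (Matrix.of fun a a' => ρ (a, p.2) (a', q.2)) p.1 q.1

/-- The induced map `id ⊗ Γ` on the bipartite system, acting blockwise. -/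
def tensIdB {A B : Type*} (Γ : Matrix B B ℂ → Matrix B B ℂ)
    (ρ : Matrix (A × B) (A × B) ℂ) : Matrix (A × B) (A × B) ℂ :=
  Matrix.of fun p q => Γ (Matrix.of fun b b' => ρ (p.1, b) (q.1, b')) p.2 q.2

/-- `Λ` is A↛B semicausal: no channel applied by Alice beforehand affects Bob's
reduced output state. -/
def SemicausalAtoB {A B : Type*} [Fintype A] [Fintype B] [DecidableEq A]
    (Λ : Matrix (A × B) (A × B) ℂ → Matrix (A × B) (A × B) ℂ) : Prop :=
  ∀ ρ : Matrix (A × B) (A × B) ℂ, IsState ρ →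
    ∀ Γ : Matrix A A ℂ → Matrix A A ℂ, IsChannel Γ →
      trA (Λ (tensIdA Γ ρ)) = trA (Λ ρ)

/-- `Λ` is A↚B semicausal: no channel applied by Bob beforehand affects Alice's
reduced output state. -/
def SemicausalBtoA {A B : Type*} [Fintype A] [Fintype B] [DecidableEq B]
    (Λ : Matrix (A × B) (A × B) ℂ → Matrix (A × B) (A × B) ℂ) : Prop :=
  ∀ ρ : Matrix (A × B) (A × B) ℂ, IsState ρ →
    ∀ Γ : Matrix B B ℂ → Matrix B B ℂ, IsChannel Γ →
      trB (Λ (tensIdB Γ ρ)) = trB (Λ ρ)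

/-- `Λ` is causal: both A↛B and A↚B semicausal. -/
def Causal {A B : Type*} [Fintype A] [Fintype B] [DecidableEq A] [DecidableEq B]
    (Λ : Matrix (A × B) (A × B) ℂ → Matrix (A × B) (A × B) ℂ) : Prop :=
  SemicausalAtoB Λ ∧ SemicausalBtoA Λ

/-!
Pass to the Heisenberg picture. Invariance of Bob's output under Alice's local unitaries says that
`Uᴴ (1 ⊗ Y) U` commutes with every `V ⊗ 1`, and unitaries span, so `U (X ⊗ 1) Uᴴ` commutes with
every `1 ⊗ Y` and hence has the form `Z ⊗ 1`. Taking `X` a matrix unit, the blocks `P`, `P'` of `U`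
satisfy `P P'ᴴ ∈ ℂ 1`; all of them are therefore multiples of a single one, which is a Kronecker
factorization of `U`, and its factors can be rescaled to be unitary. Only one of the two
no-signalling directions enters; the other is its mirror image under swapping the tensor factors.
-/

section Blocks

variable {A B R : Type*}

/-- The block `(⟨a| ⊗ 1) M (|a'⟩ ⊗ 1)` of a matrix `M` on a tensor product, as a matrix on the
second factor. -/
def block (M : Matrix (A × B) (A × B) R) (a a' : A) : Matrix B B R :=
  M.submatrix (Prod.mk a) (Prod.mk a')

theorem ext_block {M N : Matrix (A × B) (A × B) R}
    (h : ∀ a a', block M a a' = block N a a') : M = N := by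
  ext ⟨a, b⟩ ⟨a', b'⟩
  exact congr_fun₂ (h a a') b b'

theorem block_kronecker [Mul R] (X : Matrix A A R) (Y : Matrix B B R) (a a' : A) :
    block (X ⊗ₖ Y) a a' = X a a' • Y :=
  rfl

variable [Fintype A] [Fintype B]

section Semiring

variable [Semiring R] [DecidableEq A]

theorem block_mul_one_kronecker (M : Matrix (A × B) (A × B) R) (Y : Matrix B B R) (a a' : A) :
    block (M * (1 ⊗ₖ Y)) a a' = block M a a' * Y := by
  ext b b'
  simp [block, mul_apply, Fintype.sum_prod_type, one_apply]

theorem block_one_kronecker_mul (M : Matrix (A × B) (A × B) R) (Y : Matrix B B R) (a a' : A) :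
    block ((1 ⊗ₖ Y) * M) a a' = Y * block M a a' := by
  ext b b'
  simp [block, mul_apply, Fintype.sum_prod_type, one_apply]

theorem block_mul_single_kronecker_one_mul_conjTranspose [StarRing R] [DecidableEq B]
    (M : Matrix (A × B) (A × B) R) (a a' c c' : A) :
    block (M * (single c c' 1 ⊗ₖ 1) * Mᴴ) a a' = block M a c * (block M a' c')ᴴ := by
  ext b b'
  simp [block, mul_apply, Fintype.sum_prod_type, one_apply, single_apply, ite_and]

theorem exists_eq_kronecker_one_of_forall_commute [DecidableEq B] {M : Matrix (A × B) (A × B) R}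
    (hM : ∀ Y : Matrix B B R, Commute (1 ⊗ₖ Y) M) : ∃ Z : Matrix A A R, M = Z ⊗ₖ 1 := by
  have block_scalar (a a' : A) : ∃ z : R, scalar B z = block M a a' := by
    refine mem_range_scalar_iff_commute_single'.2 fun b b' => ?_
    rw [Commute, SemiconjBy, ← block_one_kronecker_mul, ← block_mul_one_kronecker, (hM _).eq]
  choose Z hZ using block_scalar
  refine ⟨Matrix.of Z, ext_block fun a a' => ?_⟩
  rw [block_kronecker, ← hZ, scalar_apply, ← smul_one_eq_diagonal, of_apply]

end Semiring

theorem exists_eq_kronecker_of_conj_kronecker_one {𝕜 : Type*} [RCLike 𝕜] [DecidableEq B]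
    {U : Matrix (A × B) (A × B) 𝕜}
    (hU : ∀ X : Matrix A A 𝕜, ∃ Z : Matrix A A 𝕜, U * (X ⊗ₖ 1) * Uᴴ = Z ⊗ₖ 1) :
    ∃ (L : Matrix A A 𝕜) (Q : Matrix B B 𝕜), U = L ⊗ₖ Q := by
  classical
  have block_mul_block (a c a' c' : A) : ∃ l : 𝕜, block U a c * (block U a' c')ᴴ = l • 1 := by
    obtain ⟨Z, hZ⟩ := hU (single c c' 1)
    exact ⟨Z a a', by
      rw [← block_mul_single_kronecker_one_mul_conjTranspose, hZ, block_kronecker]⟩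
  by_cases hU₀ : ∀ a c, block U a c = 0
  · exact ⟨0, 0, ext_block fun a c => by rw [hU₀, zero_kronecker]; rfl⟩
  push Not at hU₀
  obtain ⟨a₀, c₀, hQ⟩ := hU₀
  set Q := block U a₀ c₀
  obtain ⟨m, hm⟩ := block_mul_block a₀ c₀ a₀ c₀
  have hm₀ : m ≠ 0 := by
    rintro rfl
    exact hQ (self_mul_conjTranspose_eq_zero.1 (hm.trans (zero_smul 𝕜 1)))
  have Q_inverse : Qᴴ * (m⁻¹ • Q) = 1 := by
    rw [mul_eq_one_comm, smul_mul, hm, inv_smul_smul₀ hm₀]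
  choose l hl using block_mul_block
  refine ⟨Matrix.of fun a c => l a c a₀ c₀ * m⁻¹, Q, ext_block fun a c => ?_⟩
  calc block U a c = block U a c * Qᴴ * (m⁻¹ • Q) := by rw [Matrix.mul_assoc, Q_inverse, mul_one]
    _ = (l a c a₀ c₀ * m⁻¹) • Q := by rw [hl, smul_mul, one_mul, smul_smul]

end Blocks

section UnitaryKronecker

variable {A B : Type*} [DecidableEq A] [DecidableEq B] [Nonempty A] [Nonempty B]

theorem exists_eq_smul_one_of_kronecker_eq_one {K : Type*} [Field K] {X : Matrix A A K}
    {Y : Matrix B B K} (h : X ⊗ₖ Y = 1) : ∃ c : K, c ≠ 0 ∧ X = c⁻¹ • 1 ∧ Y = c • 1 := by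
  obtain ⟨a₀⟩ := ‹Nonempty A›
  obtain ⟨b₀⟩ := ‹Nonempty B›
  have entry (a a' : A) (b b' : B) :
      X a a' * Y b b' = (1 : Matrix (A × B) (A × B) K) (a, b) (a', b') :=
    congr_fun₂ h (a, b) (a', b')
  have hXY : X a₀ a₀ * Y b₀ b₀ = 1 := by rw [entry, one_apply_eq]
  have hX₀ : X a₀ a₀ = (Y b₀ b₀)⁻¹ := eq_inv_of_mul_eq_one_left hXY
  have hY₀ : Y b₀ b₀ ≠ 0 := right_ne_zero_of_mul_eq_one hXY
  refine ⟨Y b₀ b₀, hY₀, ?_, ?_⟩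
  · ext a a'
    rw [eq_div_of_mul_eq hY₀ (entry a a' b₀ b₀)]
    simp [one_apply, div_eq_inv_mul]
  · ext b b'
    have hY : (Y b₀ b₀)⁻¹ * Y b b' = (1 : Matrix (A × B) (A × B) K) (a₀, b) (a₀, b') :=
      hX₀ ▸ entry a₀ a₀ b b'
    rw [(inv_mul_eq_iff_eq_mul₀ hY₀).1 hY]
    simp [one_apply]

theorem smul_mem_unitaryGroup {n R : Type*} [Fintype n] [DecidableEq n] [CommRing R] [StarRing R]
    {X : Matrix n n R} {c s : R} (hX : X * Xᴴ = c • 1) (hs : s * star s * c = 1) :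
    s • X ∈ unitaryGroup n R := by
  rw [mem_unitaryGroup_iff, star_eq_conjTranspose, conjTranspose_smul, Matrix.smul_mul,
    Matrix.mul_smul, hX, smul_smul, smul_smul, hs, one_smul]

theorem exists_unitary_kronecker_eq {𝕜 : Type*} [RCLike 𝕜] [Fintype A] [Fintype B]
    {X : Matrix A A 𝕜} {Y : Matrix B B 𝕜}
    (h : X ⊗ₖ Y ∈ unitaryGroup (A × B) 𝕜) :
    ∃ (V : Matrix A A 𝕜) (W : Matrix B B 𝕜),
      V ∈ unitaryGroup A 𝕜 ∧ W ∈ unitaryGroup B 𝕜 ∧ X ⊗ₖ Y = V ⊗ₖ W := by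
  have hXY : (X * Xᴴ) ⊗ₖ (Y * Yᴴ) = 1 := by
    rw [mul_kronecker_mul, ← conjTranspose_kronecker]
    exact mem_unitaryGroup_iff.1 h
  obtain ⟨c, hc, hX, hY⟩ := exists_eq_smul_one_of_kronecker_eq_one hXY
  obtain ⟨s, hs⟩ : ∃ s : 𝕜, s * star s = c := by
    obtain ⟨b₀⟩ := ‹Nonempty B›
    have hc_nonneg : 0 ≤ c := by
      simpa [hY] using (posSemidef_self_mul_conjTranspose Y).diag_nonneg (i := b₀)
    refine ⟨(√‖c‖ : ℝ), ?_⟩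
    rw [RCLike.star_def, RCLike.conj_ofReal, ← RCLike.ofReal_mul,
      Real.mul_self_sqrt (norm_nonneg c), RCLike.norm_of_nonneg' hc_nonneg]
  have hs₀ : s ≠ 0 := left_ne_zero_of_mul (hs ▸ hc)
  refine ⟨s • X, s⁻¹ • Y, smul_mem_unitaryGroup hX ?_, smul_mem_unitaryGroup hY ?_, ?_⟩
  · rw [hs, mul_inv_cancel₀ hc]
  · rw [star_inv₀, ← mul_inv, hs, inv_mul_cancel₀ hc]
  · rw [smul_kronecker, kronecker_smul, smul_inv_smul₀ hs₀]

end UnitaryKronecker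

theorem trace_conj_mul {m n R : Type*} [Fintype m] [Fintype n] [NonUnitalCommSemiring R]
    [Star R] (K : Matrix m n R) (X : Matrix n n R) (M : Matrix m m R) :
    (K * X * Kᴴ * M).trace = (X * (Kᴴ * M * K)).trace := by
  rw [Matrix.mul_assoc, Matrix.mul_assoc, trace_mul_comm, Matrix.mul_assoc]

section States

variable {n : Type*} [Fintype n]

theorem span_isState : Submodule.span ℂ {ρ : Matrix n n ℂ | IsState ρ} = ⊤ := by
  classical
  open scoped Matrix.Norms.L2Operator MatrixOrder in
  rw [eq_top_iff, ← CStarAlgebra.span_nonneg, Submodule.span_le]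
  intro ρ hρ
  have hρ_psd : ρ.PosSemidef := nonneg_iff_posSemidef.1 hρ
  by_cases htr : ρ.trace = 0
  · rw [hρ_psd.trace_eq_zero_iff.1 htr]
    exact zero_mem _
  have normalized : IsState (ρ.trace⁻¹ • ρ) :=
    ⟨hρ_psd.smul (inv_nonneg.2 hρ_psd.trace_nonneg), by
      rw [trace_smul, smul_eq_mul, inv_mul_cancel₀ htr]⟩
  rw [← smul_inv_smul₀ htr ρ]
  exact Submodule.smul_mem _ _ (Submodule.subset_span normalized)

theorem eq_of_forall_isState_trace_mul_eq {M N : Matrix n n ℂ}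
    (h : ∀ ρ, IsState ρ → (ρ * M).trace = (ρ * N).trace) : M = N := by
  refine ext_iff_trace_mul_left.2 fun ρ => ?_
  have hρ : ρ ∈ Submodule.span ℂ {ρ : Matrix n n ℂ | IsState ρ} := by simp [span_isState]
  induction hρ using Submodule.span_induction with
  | mem ρ hρ => exact h ρ hρ
  | zero => simp
  | add ρ σ _ _ hρ hσ => simp only [add_mul, trace_add, hρ, hσ]
  | smul z ρ _ hρ => simp only [smul_mul, trace_smul, hρ]

theorem IsState.submatrix_equiv {m : Type*} [Fintype m] {ρ : Matrix n n ℂ} (hρ : IsState ρ)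
    (e : m ≃ n) : IsState (ρ.submatrix e e) :=
  ⟨hρ.1.submatrix e, (e.sum_comp fun i => ρ i i).trans hρ.2⟩

end States

section Channels

variable {n : Type*} [Fintype n] [DecidableEq n]

theorem IsChannel.trace_apply {Γ : Matrix n n ℂ → Matrix n n ℂ} (hΓ : IsChannel Γ)
    (X : Matrix n n ℂ) : (Γ X).trace = X.trace := by
  obtain ⟨m, K, hK, hK_one⟩ := hΓ
  calc (Γ X).trace = ∑ i, ((K i)ᴴ * K i * X).trace := by
        rw [hK, trace_sum]
        exact Finset.sum_congr rfl fun i _ => trace_mul_cycle _ _ _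
    _ = X.trace := by rw [← trace_sum, ← Finset.sum_mul, hK_one, one_mul]

theorem isChannel_unitary_conj {V : Matrix n n ℂ} (hV : V ∈ unitaryGroup n ℂ) :
    IsChannel fun X => V * X * Vᴴ :=
  ⟨1, fun _ => V, by simp, by
    rw [Fin.sum_univ_one, ← star_eq_conjTranspose, mem_unitaryGroup_iff'.1 hV]⟩

end Channels

section PartialTrace

variable {A B : Type*} [Fintype A]

theorem trA_eq_sum_block (ρ : Matrix (A × B) (A × B) ℂ) : trA ρ = ∑ a, block ρ a a := by
  ext b b'
  simp [trA, block, Matrix.sum_apply]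

theorem trace_trA_mul [Fintype B] [DecidableEq A] (ρ : Matrix (A × B) (A × B) ℂ)
    (Y : Matrix B B ℂ) : (trA ρ * Y).trace = (ρ * (1 ⊗ₖ Y)).trace := by
  simp only [trA_eq_sum_block, Finset.sum_mul, trace_sum, ← block_mul_one_kronecker]
  exact (Fintype.sum_prod_type (diag (ρ * (1 ⊗ₖ Y) : Matrix (A × B) (A × B) ℂ))).symm

theorem trA_kronecker_conj [Fintype B] [DecidableEq A] {V : Matrix A A ℂ}
    (hV : V ∈ unitaryGroup A ℂ) (W : Matrix B B ℂ) (ρ : Matrix (A × B) (A × B) ℂ) :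
    trA ((V ⊗ₖ W) * ρ * (V ⊗ₖ W)ᴴ) = W * trA ρ * Wᴴ := by
  have conj_one_kronecker (Y : Matrix B B ℂ) :
      (V ⊗ₖ W)ᴴ * (1 ⊗ₖ Y) * (V ⊗ₖ W) = 1 ⊗ₖ (Wᴴ * Y * W) := by
    rw [conjTranspose_kronecker, ← mul_kronecker_mul, ← mul_kronecker_mul, mul_one,
      ← star_eq_conjTranspose V, mem_unitaryGroup_iff'.1 hV]
  refine ext_iff_trace_mul_right.2 fun Y => ?_
  rw [trace_trA_mul, trace_conj_mul, conj_one_kronecker, ← trace_trA_mul, trace_conj_mul]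

theorem trA_tensIdA [DecidableEq A] {Γ : Matrix A A ℂ → Matrix A A ℂ} (hΓ : IsChannel Γ)
    (ρ : Matrix (A × B) (A × B) ℂ) : trA (tensIdA Γ ρ) = trA ρ := by
  ext b b'
  exact hΓ.trace_apply (Matrix.of fun a a' => ρ (a, b) (a', b'))

theorem tensIdA_conj [Fintype B] [DecidableEq B] (V : Matrix A A ℂ)
    (ρ : Matrix (A × B) (A × B) ℂ) :
    tensIdA (fun X => V * X * Vᴴ) ρ = (V ⊗ₖ 1) * ρ * (V ⊗ₖ 1)ᴴ := by
  ext ⟨a, b⟩ ⟨a', b'⟩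
  simp [tensIdA, mul_apply, Fintype.sum_prod_type, one_apply, apply_ite star]

end PartialTrace

section Swap

variable {A B R : Type*}

theorem submatrix_swap_kronecker [CommMagma R] (X : Matrix A A R) (Y : Matrix B B R) :
    (X ⊗ₖ Y).submatrix Prod.swap Prod.swap = Y ⊗ₖ X := by
  ext
  exact mul_comm _ _

variable [Fintype A] [Fintype B]

theorem submatrix_swap_mul [NonUnitalNonAssocSemiring R] (M N : Matrix (A × B) (A × B) R) :
    (M * N).submatrix Prod.swap Prod.swap =
      M.submatrix Prod.swap Prod.swap * N.submatrix Prod.swap Prod.swap :=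
  (submatrix_mul_equiv M N Prod.swap (Equiv.prodComm B A) Prod.swap).symm

theorem submatrix_swap_conj [NonUnitalSemiring R] [Star R] (U : Matrix (A × B) (A × B) R)
    (X : Matrix (B × A) (B × A) R) :
    (U * X.submatrix Prod.swap Prod.swap * Uᴴ).submatrix Prod.swap Prod.swap =
      U.submatrix Prod.swap Prod.swap * X * (U.submatrix Prod.swap Prod.swap)ᴴ := by
  rw [submatrix_swap_mul, submatrix_swap_mul, conjTranspose_submatrix, submatrix_submatrix,
    Prod.swap_swap_eq, submatrix_id_id]

theorem submatrix_swap_mem_unitaryGroup [DecidableEq A] [DecidableEq B] [CommRing R] [StarRing R]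
    {U : Matrix (A × B) (A × B) R} (hU : U ∈ unitaryGroup (A × B) R) :
    U.submatrix Prod.swap Prod.swap ∈ unitaryGroup (B × A) R := by
  rw [mem_unitaryGroup_iff, star_eq_conjTranspose, conjTranspose_submatrix,
    ← submatrix_swap_mul, ← star_eq_conjTranspose, mem_unitaryGroup_iff.1 hU]
  exact submatrix_one_equiv (Equiv.prodComm B A)

end Swap

theorem semicausalBtoA_iff_semicausalAtoB_swap {A B : Type*} [Fintype A] [Fintype B]
    [DecidableEq B] {Λ : Matrix (A × B) (A × B) ℂ → Matrix (A × B) (A × B) ℂ} :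
    SemicausalBtoA Λ ↔ SemicausalAtoB fun X : Matrix (B × A) (B × A) ℂ =>
      (Λ (X.submatrix Prod.swap Prod.swap)).submatrix Prod.swap Prod.swap :=
  ⟨fun h _ hρ => h _ (hρ.submatrix_equiv (Equiv.prodComm A B)),
    fun h _ hρ => h _ (hρ.submatrix_equiv (Equiv.prodComm B A))⟩

section Semicausal

variable {A B : Type*} [Fintype A] [Fintype B] [DecidableEq A] [DecidableEq B]
  {U : Matrix (A × B) (A × B) ℂ}

theorem SemicausalAtoB.commute_unitary_kronecker_one (h : SemicausalAtoB fun X => U * X * Uᴴ)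
    {V : Matrix A A ℂ} (hV : V ∈ unitaryGroup A ℂ) (Y : Matrix B B ℂ) :
    Commute (V ⊗ₖ 1) (Uᴴ * (1 ⊗ₖ Y) * U) := by
  set M := Uᴴ * (1 ⊗ₖ Y) * U
  have trace_trA_conj (ρ : Matrix (A × B) (A × B) ℂ) :
      (trA (U * ρ * Uᴴ) * Y).trace = (ρ * M).trace := by
    rw [trace_trA_mul, trace_conj_mul]
  have hVM : (V ⊗ₖ 1)ᴴ * M * (V ⊗ₖ 1) = M := by
    refine eq_of_forall_isState_trace_mul_eq fun ρ hρ => ?_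
    calc (ρ * ((V ⊗ₖ 1)ᴴ * M * (V ⊗ₖ 1))).trace = ((V ⊗ₖ 1) * ρ * (V ⊗ₖ 1)ᴴ * M).trace :=
          (trace_conj_mul _ _ _).symm
      _ = (trA (U * tensIdA (fun X => V * X * Vᴴ) ρ * Uᴴ) * Y).trace := by
          rw [trace_trA_conj, tensIdA_conj]
      _ = (ρ * M).trace := by
          rw [h ρ hρ _ (isChannel_unitary_conj hV), trace_trA_conj]
  have hV_one : (V ⊗ₖ 1) * (V ⊗ₖ (1 : Matrix B B ℂ))ᴴ = 1 :=
    mem_unitaryGroup_iff.1 (kronecker_mem_unitary hV (one_mem _))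
  calc (V ⊗ₖ 1) * M = (V ⊗ₖ 1) * ((V ⊗ₖ 1)ᴴ * M * (V ⊗ₖ 1)) := by rw [hVM]
    _ = M * (V ⊗ₖ 1) := by rw [← Matrix.mul_assoc, ← Matrix.mul_assoc, hV_one, one_mul]

theorem SemicausalAtoB.commute_kronecker_one (h : SemicausalAtoB fun X => U * X * Uᴴ)
    (X : Matrix A A ℂ) (Y : Matrix B B ℂ) : Commute (X ⊗ₖ 1) (Uᴴ * (1 ⊗ₖ Y) * U) := by
  open scoped Matrix.Norms.L2Operator in
  have hX : X ∈ Submodule.span ℂ (unitary (Matrix A A ℂ) : Set (Matrix A A ℂ)) := by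
    simp [CStarAlgebra.span_unitary]
  induction hX using Submodule.span_induction with
  | mem V hV => exact h.commute_unitary_kronecker_one hV Y
  | zero => simp
  | add X X' _ _ hX hX' => simpa only [add_kronecker] using hX.add_left hX'
  | smul z X _ hX => simpa only [smul_kronecker] using hX.smul_left z

theorem SemicausalAtoB.exists_conj_kronecker_one_eq (hU : U ∈ unitaryGroup (A × B) ℂ)
    (h : SemicausalAtoB fun X => U * X * Uᴴ) (X : Matrix A A ℂ) :
    ∃ Z : Matrix A A ℂ, U * (X ⊗ₖ 1) * Uᴴ = Z ⊗ₖ 1 := by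
  have hUU : U * Uᴴ = 1 := mem_unitaryGroup_iff.1 hU
  refine exists_eq_kronecker_one_of_forall_commute fun Y => ?_
  calc (1 ⊗ₖ Y) * (U * (X ⊗ₖ 1) * Uᴴ)
      = U * (Uᴴ * (1 ⊗ₖ Y) * U * (X ⊗ₖ 1)) * Uᴴ := by
        simp only [← Matrix.mul_assoc, hUU, one_mul]
    _ = U * ((X ⊗ₖ 1) * (Uᴴ * (1 ⊗ₖ Y) * U)) * Uᴴ := by rw [(h.commute_kronecker_one X Y).eq]
    _ = U * (X ⊗ₖ 1) * Uᴴ * (1 ⊗ₖ Y) := by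
        simp only [Matrix.mul_assoc, hUU, mul_one]

theorem semicausalAtoB_conj_iff [Nonempty A] [Nonempty B] (hU : U ∈ unitaryGroup (A × B) ℂ) :
    (SemicausalAtoB fun X => U * X * Uᴴ) ↔
      ∃ (UA : Matrix A A ℂ) (UB : Matrix B B ℂ),
        UA ∈ unitaryGroup A ℂ ∧ UB ∈ unitaryGroup B ℂ ∧ U = UA ⊗ₖ UB := by
  constructor
  · intro h
    obtain ⟨L, Q, rfl⟩ :=
      exists_eq_kronecker_of_conj_kronecker_one (h.exists_conj_kronecker_one_eq hU)
    exact exists_unitary_kronecker_eq hU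
  · rintro ⟨UA, UB, hUA, -, rfl⟩ ρ - Γ hΓ
    simp only [trA_kronecker_conj hUA, trA_tensIdA hΓ]

theorem semicausalBtoA_conj_iff [Nonempty A] [Nonempty B] (hU : U ∈ unitaryGroup (A × B) ℂ) :
    (SemicausalBtoA fun X => U * X * Uᴴ) ↔
      ∃ (UA : Matrix A A ℂ) (UB : Matrix B B ℂ),
        UA ∈ unitaryGroup A ℂ ∧ UB ∈ unitaryGroup B ℂ ∧ U = UA ⊗ₖ UB := by
  rw [semicausalBtoA_iff_semicausalAtoB_swap]
  simp only [submatrix_swap_conj]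
  rw [semicausalAtoB_conj_iff (submatrix_swap_mem_unitaryGroup hU)]
  constructor
  · rintro ⟨UB, UA, hUB, hUA, h⟩
    exact ⟨UA, UB, hUA, hUB, by
      rw [← submatrix_swap_kronecker, ← h, submatrix_submatrix, Prod.swap_swap_eq,
        submatrix_id_id]⟩
  · rintro ⟨UA, UB, hUA, hUB, rfl⟩
    exact ⟨UB, UA, hUB, hUA, submatrix_swap_kronecker UA UB⟩

end Semicausal

theorem stmt_11_general {A B : Type*} [Fintype A] [Fintype B] [DecidableEq A] [DecidableEq B]
    [Nonempty A] [Nonempty B]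
    (U : Matrix (A × B) (A × B) ℂ) (hU : U ∈ unitaryGroup (A × B) ℂ) :
    List.TFAE [SemicausalAtoB fun X => U * X * Uᴴ,
      SemicausalBtoA fun X => U * X * Uᴴ,
      Causal fun X => U * X * Uᴴ,
      ∃ (UA : Matrix A A ℂ) (UB : Matrix B B ℂ),
        UA ∈ unitaryGroup A ℂ ∧ UB ∈ unitaryGroup B ℂ ∧ U = UA ⊗ₖ UB] := by
  tfae_have 1 ↔ 4 := semicausalAtoB_conj_iff hU
  tfae_have 2 ↔ 4 := semicausalBtoA_conj_iff hU
  tfae_have 3 → 1 := And.left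
  tfae_have 4 → 3 := fun h => ⟨tfae_1_iff_4.2 h, tfae_2_iff_4.2 h⟩
  tfae_finish

/-- a unitary channel is causal iff the unitary is a product unitary
`U = U_A ⊗ U_B`; in particular every non-product unitary is signalling. -/
theorem stmt_11 {A B : Type*} [Fintype A] [Fintype B] [DecidableEq A] [DecidableEq B]
    [Nonempty A] [Nonempty B]
    (U : Matrix (A × B) (A × B) ℂ) (hU : U ∈ Matrix.unitaryGroup (A × B) ℂ) :
    Causal (fun X => U * X * Uᴴ) ↔
      ∃ (UA : Matrix A A ℂ) (UB : Matrix B B ℂ),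
        UA ∈ Matrix.unitaryGroup A ℂ ∧ UB ∈ Matrix.unitaryGroup B ℂ ∧
          U = UA ⊗ₖ UB :=
  (stmt_11_general U hU).out 2 3
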